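/- Let m ≥ 6 be even and let f₇(x) = x + x^{2^{m/2+1} − 1} + x^{2^m − 2^{m/2+1} + 2}; let s_t = Tr(f₇(α^t + 1)). Then the linear span is L_s = m·(2^{(m−2)/2} − 1); consequently the binary cyclic code C_s has length 2^m − 1 and 𝔽₂-dimension 2^m − 1 − m(2^{(m−2)/2} − 1), and the minimum distance satisfies 2^{(m−4)/2} + 1 ≤ d(C_s) ≤ 1 + m(2^{(m−2)/2} − 1). -/

import Mathlib

open Polynomial
open scoped Classical

/-- The polynomial S(x) = ∑_{t=0}^{v−1} s_t x^t ∈ 𝔽₂[x], where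
    s_t = Tr(f(α^t + 1)) and v = 2^m − 1. -/
noncomputable def traceSeqPoly (m : ℕ) (α : GaloisField 2 m)
    (f : GaloisField 2 m → GaloisField 2 m) : Polynomial (ZMod 2) :=
  ∑ t ∈ Finset.range (2 ^ m - 1),
    C (Algebra.trace (ZMod 2) (GaloisField 2 m) (f (α ^ t + 1))) * X ^ t

/-- The minimal polynomial of the sequence:
    g_s(x) = (x^v − 1)/gcd(x^v − 1, S(x)). Its degree is the linear span L_s. -/
noncomputable def genPoly (m : ℕ) (α : GaloisField 2 m)
    (f : GaloisField 2 m → GaloisField 2 m) : Polynomial (ZMod 2) :=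
  (X ^ (2 ^ m - 1) - 1) /
    EuclideanDomain.gcd (X ^ (2 ^ m - 1) - 1) (traceSeqPoly m α f)

/-- The binary cyclic code C_s = {c ∈ 𝔽₂[x] : deg c < v and g_s ∣ c},
    as an 𝔽₂-submodule of 𝔽₂[x]. -/
noncomputable def codeC (m : ℕ) (α : GaloisField 2 m)
    (f : GaloisField 2 m → GaloisField 2 m) :
    Submodule (ZMod 2) (Polynomial (ZMod 2)) :=
  Polynomial.degreeLT (ZMod 2) (2 ^ m - 1) ⊓
    (Ideal.span {genPoly m α f}).restrictScalars (ZMod 2)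

/-- The set of Hamming weights (numbers of nonzero coefficients) of the
    nonzero codewords of a code; the minimum distance is its least element. -/
def wtSet (Cs : Submodule (ZMod 2) (Polynomial (ZMod 2))) : Set ℕ :=
  {w | ∃ c : Polynomial (ZMod 2), c ∈ Cs ∧ c ≠ 0 ∧ c.support.card = w}

/-!
Write `m = 2k + 4` and `P = 2 ^ k`. In characteristic 2, `(x + 1) ^ (2 ^ a - 1)` is the geometric
sum `∑ i < 2 ^ a, x ^ i`, and `Tr` does not change when its argument is squared. Expanding
`Tr (f₇ (x + 1))` with these two facts, most monomials cancel in pairs and what remains is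
`∑ Tr (x ^ e)` over the `2P - 1` exponents `2P < e < 3P` and `e = 6P + 1, 6P + 3, …, 8P - 1`. A
comparison of binary expansions shows that these exponents lie in distinct cyclotomic cosets of
full size `m`. Writing the traces as sums of conjugates, `s_t` becomes a sum of distinct
exponentials `α ^ (e * 2 ^ i * t)`, so the roots of `g_s` are exactly the `α ^ (-e * 2 ^ i)` and
`L_s = m (2P - 1)`.

The odd exponents above give `P` roots of `g_s` in geometric progression with ratio `α ^ (-2)`,
again a primitive `(2 ^ m - 1)`-th root of unity, and the BCH bound gives `d ≥ P + 1`. The upper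
bound holds because `g_s` is itself a codeword.
-/

local notation "Tr" => Algebra.trace (ZMod 2) (GaloisField 2 _)

section GeometricSums

variable {R : Type*} [CommRing R] [CharP R 2]

theorem add_one_pow_two_pow_sub_one (x : R) (a : ℕ) :
    (x + 1) ^ (2 ^ a - 1) = ∑ i ∈ Finset.range (2 ^ a), x ^ i := by
  induction a with
  | zero => simp
  | succ a ih =>
    have hexp : 2 ^ (a + 1) - 1 = (2 ^ a - 1) + 2 ^ a := by
      have := Nat.one_le_two_pow (n := a)
      rw [pow_succ]; omega
    rw [hexp, pow_add, ih, add_pow_char_pow, one_pow, mul_add, mul_one, Finset.sum_mul, pow_succ,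
      mul_two, Finset.sum_range_add, add_comm]
    simp only [← pow_add, add_comm]

theorem geom_sum_add_geom_sum_mul (x : R) (N : ℕ) :
    ∑ i ∈ Finset.range (4 * N), x ^ i + (∑ i ∈ Finset.range N, x ^ i) * (x ^ (2 * N) + 1) =
      ∑ i ∈ Finset.Ico N (2 * N), x ^ i + ∑ i ∈ Finset.Ico (3 * N) (4 * N), x ^ i := by
  have hshift : (∑ i ∈ Finset.range N, x ^ i) * x ^ (2 * N) =
      ∑ i ∈ Finset.Ico (2 * N) (3 * N), x ^ i := by
    rw [Finset.sum_Ico_eq_sum_range, Finset.sum_mul, show 3 * N - 2 * N = N by omega]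
    exact Finset.sum_congr rfl fun i _ => by ring
  have hsplit : ∑ i ∈ Finset.range (4 * N), x ^ i =
      ∑ i ∈ Finset.range N, x ^ i + ∑ i ∈ Finset.Ico N (2 * N), x ^ i +
        ∑ i ∈ Finset.Ico (2 * N) (3 * N), x ^ i + ∑ i ∈ Finset.Ico (3 * N) (4 * N), x ^ i := by
    simp only [Finset.range_eq_Ico]
    rw [Finset.sum_Ico_consecutive _ (by omega) (by omega),
      Finset.sum_Ico_consecutive _ (by omega) (by omega),
      Finset.sum_Ico_consecutive _ (by omega) (by omega)]
  rw [mul_add, mul_one, hshift, hsplit]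
  linear_combination (∑ i ∈ Finset.range N, x ^ i + ∑ i ∈ Finset.Ico (2 * N) (3 * N), x ^ i) *
    CharTwo.two_eq_zero (R := R)

theorem add_one_pow_add_add_one_pow_mul (x : R) (k : ℕ) :
    (x + 1) ^ (2 ^ (k + 3) - 1) + (x + 1) ^ (2 ^ (k + 1) - 1) * (x + 1) ^ 2 ^ (k + 2) =
      ∑ i ∈ Finset.Ico (2 * 2 ^ k) (4 * 2 ^ k), x ^ i +
        ∑ i ∈ Finset.Ico (6 * 2 ^ k) (8 * 2 ^ k), x ^ i := by
  have hgeom := geom_sum_add_geom_sum_mul x (2 ^ (k + 1))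
  rw [add_one_pow_two_pow_sub_one, add_one_pow_two_pow_sub_one, add_pow_char_pow, one_pow]
  convert hgeom using 4 <;> ring

end GeometricSums

theorem sum_Ico_two_mul {M : Type*} [AddCommMonoid M] (F : ℕ → M) {a b : ℕ} (hab : a ≤ b) :
    ∑ i ∈ Finset.Ico (2 * a) (2 * b), F i =
      ∑ i ∈ Finset.Ico a b, F (2 * i) + ∑ i ∈ Finset.Ico a b, F (2 * i + 1) := by
  induction b, hab using Nat.le_induction with
  | base => simp
  | succ b hab ih =>
    rw [mul_add, mul_one, Finset.sum_Ico_succ_top (by omega), Finset.sum_Ico_succ_top (by omega),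
      Finset.sum_Ico_succ_top hab, Finset.sum_Ico_succ_top hab, ih]
    abel

section TraceMap

theorem trace_pow_card_pow {F K : Type*} [Field F] [Fintype F] [Field K] [Algebra F K]
    [Algebra.IsAlgebraic F K] (x : K) (n : ℕ) :
    Algebra.trace F K (x ^ Fintype.card F ^ n) = Algebra.trace F K x := by
  induction n with
  | zero => simp
  | succ n ih =>
    rw [pow_succ, pow_mul, ← ih]
    exact Algebra.trace_eq_of_algEquiv (FiniteField.frobeniusAlgEquivOfAlgebraic F K) _

variable {m : ℕ}

theorem trace_pow_two_pow (x : GaloisField 2 m) (a : ℕ) :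
    Tr (x ^ 2 ^ a) = Tr x := by
  simpa only [ZMod.card] using trace_pow_card_pow (F := ZMod 2) x a

theorem algebraMap_trace_eq_sum_pow_two_pow (hm : m ≠ 0) (x : GaloisField 2 m) :
    algebraMap (ZMod 2) (GaloisField 2 m) (Tr x) =
      ∑ i ∈ Finset.range m, x ^ 2 ^ i := by
  rw [FiniteField.algebraMap_trace_eq_sum_pow, GaloisField.finrank 2 hm, Nat.card_zmod]

theorem trace_one_eq_zero_of_even (hm : m ≠ 0) (he : Even m) :
    Tr (1 : GaloisField 2 m) = 0 := by
  rw [← map_one (algebraMap (ZMod 2) (GaloisField 2 m)), Algebra.trace_algebraMap,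
    GaloisField.finrank 2 hm, nsmul_one]
  exact ZMod.natCast_eq_zero_iff_even.mpr he

end TraceMap

section CyclicCode

theorem aeval_div_gcd_eq_zero_iff {F K : Type*} [Field F] [DecidableEq F[X]] [CommRing K]
    [IsDomain K] [Algebra F K] {p q : F[X]} (hp : p.Separable) (x : K) :
    aeval x (p / EuclideanDomain.gcd p q) = 0 ↔ aeval x p = 0 ∧ aeval x q ≠ 0 := by
  set d := EuclideanDomain.gcd p q with hd
  have hdg : d * (p / d) = p :=
    EuclideanDomain.mul_div_cancel' (fun h => hp.ne_zero (EuclideanDomain.gcd_eq_zero_iff.mp h).1)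
      (EuclideanDomain.gcd_dvd_left p q)
  have hmul : aeval x d * aeval x (p / d) = aeval x p := by rw [← map_mul, hdg]
  constructor
  · intro hx
    have hpx : aeval x p = 0 := by rw [← hmul, hx, mul_zero]
    refine ⟨hpx, fun hqx => ?_⟩
    have hdx : aeval x d = 0 := by
      rw [hd, EuclideanDomain.gcd_eq_gcd_ab, map_add, map_mul, map_mul, hpx, hqx, zero_mul,
        zero_mul, add_zero]
    have hcop : IsCoprime d (p / d) := Separable.isCoprime (by rwa [hdg])
    obtain ⟨a, b, hab⟩ := hcop
    simpa [hdx, hx] using congrArg (aeval x) hab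
  · rintro ⟨hpx, hqx⟩
    refine (mul_eq_zero.mp (hmul.trans hpx)).resolve_left fun hdx => hqx ?_
    exact zero_dvd_iff.mp (hdx ▸ map_dvd (aeval x) (EuclideanDomain.gcd_dvd_right p q))

theorem finrank_degreeLT_inf_span_singleton {F : Type*} [Field F] (n : ℕ) {g : F[X]}
    (hg : g ≠ 0) :
    Module.finrank F ↥(degreeLT F n ⊓ (Ideal.span {g}).restrictScalars F) =
      n - g.natDegree := by
  have hdeg (q : F[X]) : (g * q).degree < n ↔ q.degree < (n - g.natDegree : ℕ) := by
    rcases eq_or_ne q 0 with rfl | hq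
    · simp
    · rw [← natDegree_lt_iff_degree_lt hq, ← natDegree_lt_iff_degree_lt (mul_ne_zero hg hq),
        natDegree_mul hg hq]
      omega
  have hmap : degreeLT F n ⊓ (Ideal.span {g}).restrictScalars F =
      (degreeLT F (n - g.natDegree)).map (LinearMap.mulLeft F g) := by
    ext c
    simp only [Submodule.mem_inf, Submodule.restrictScalars_mem, Ideal.mem_span_singleton,
      Submodule.mem_map, mem_degreeLT, LinearMap.mulLeft_apply]
    constructor
    · rintro ⟨hc, q, rfl⟩
      exact ⟨q, (hdeg q).mp hc, rfl⟩
    · rintro ⟨q, hq, rfl⟩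
      exact ⟨(hdeg q).mpr hq, q, rfl⟩
  have hinj : Function.Injective (LinearMap.mulLeft F g) := mul_right_injective₀ hg
  rw [hmap, ← (Submodule.equivMapOfInjective _ hinj _).finrank_eq, (degreeLTEquiv F _).finrank_eq,
    Module.finrank_fin_fun]

theorem lt_card_support_of_consecutive_roots {F K : Type*} [CommRing F] [CommRing K] [IsDomain K]
    [Algebra F K] [FaithfulSMul F K] {n N : ℕ} {β γ : K} (hβ : β ≠ 0)
    (hγ : IsPrimitiveRoot γ n) {c : F[X]} (hc : c ≠ 0) (hdeg : c.degree < n)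
    (hroot : ∀ i < N, aeval (β * γ ^ i) c = 0) : N < c.support.card := by
  by_contra! hN
  let e := c.support.equivFin.symm
  have hlt (j) : (e j : ℕ) < n :=
    WithBot.coe_lt_coe.mp ((le_degree_of_mem_supp _ (e j).2).trans_lt hdeg)
  have hinj : Function.Injective fun j => γ ^ (e j : ℕ) := fun i j hij =>
    e.injective (Subtype.ext (hγ.pow_inj (hlt i) (hlt j) hij))
  have hsum (i : Fin c.support.card) :
      ∑ j, algebraMap F K (c.coeff (e j)) * β ^ (e j : ℕ) * (γ ^ (e j : ℕ)) ^ (i : ℕ) = 0 := by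
    rw [← hroot i (i.2.trans_le hN), aeval_def, eval₂_eq_sum, Polynomial.sum_def,
      ← Finset.sum_coe_sort c.support, ← e.sum_comp]
    exact Finset.sum_congr rfl fun j _ => by ring
  have hzero := Matrix.eq_zero_of_forall_pow_sum_mul_pow_eq_zero hinj hsum
  let j : Fin c.support.card := ⟨0, Finset.card_pos.mpr (support_nonempty.mpr hc)⟩
  have hcoeff : algebraMap F K (c.coeff (e j)) ≠ 0 :=
    (map_ne_zero_iff _ (FaithfulSMul.algebraMap_injective F K)).mpr (mem_support_iff.mp (e j).2)
  exact mul_ne_zero hcoeff (pow_ne_zero _ hβ) (congrFun hzero j)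

theorem ncard_setOf_aeval_eq_zero {F K : Type*} [Field F] [Field K] [Algebra F K] {p : F[X]}
    (hp : p.Separable) (hsplit : (p.map (algebraMap F K)).Splits) :
    {x : K | aeval x p = 0}.ncard = p.natDegree := by
  have hroots : {x : K | aeval x p = 0} = p.rootSet K := by
    ext x
    simp [mem_rootSet, hp.ne_zero]
  rw [hroots, ← card_rootSet_eq_natDegree hp hsplit, ← Nat.card_coe_set_eq,
    Nat.card_eq_fintype_card]

end CyclicCode

section SequenceCode

variable {m : ℕ} {α : GaloisField 2 m} {f : GaloisField 2 m → GaloisField 2 m}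

theorem odd_two_pow_sub_one (hm : m ≠ 0) : Odd (2 ^ m - 1) :=
  Nat.Even.sub_odd Nat.one_le_two_pow (even_two.pow_of_ne_zero hm) odd_one

theorem separable_X_pow_two_pow_sub_one_sub_one (hm : m ≠ 0) :
    (X ^ (2 ^ m - 1) - 1 : (ZMod 2)[X]).Separable :=
  X_pow_sub_one_separable_iff.mpr (ZMod.natCast_ne_zero_iff_odd.mpr (odd_two_pow_sub_one hm))

theorem genPoly_dvd (α : GaloisField 2 m) (f : GaloisField 2 m → GaloisField 2 m) :
    genPoly m α f ∣ X ^ (2 ^ m - 1) - 1 :=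
  EuclideanDomain.div_dvd_of_dvd (EuclideanDomain.gcd_dvd_left _ _)

theorem separable_genPoly (hm : m ≠ 0) (α : GaloisField 2 m)
    (f : GaloisField 2 m → GaloisField 2 m) : (genPoly m α f).Separable :=
  (separable_X_pow_two_pow_sub_one_sub_one hm).of_dvd (genPoly_dvd α f)

theorem splits_map_genPoly (hm : m ≠ 0) (hα : IsPrimitiveRoot α (2 ^ m - 1)) :
    ((genPoly m α f).map (algebraMap (ZMod 2) (GaloisField 2 m))).Splits := by
  have hdvd := Polynomial.map_dvd (algebraMap (ZMod 2) (GaloisField 2 m)) (genPoly_dvd α f)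
  rw [Polynomial.map_sub, Polynomial.map_pow, map_X, Polynomial.map_one] at hdvd
  refine (X_pow_sub_one_splits hα).of_dvd (X_pow_sub_C_ne_zero ?_ 1) hdvd
  exact (odd_two_pow_sub_one hm).pos

theorem aeval_genPoly_eq_zero_iff (hm : m ≠ 0) (x : GaloisField 2 m) :
    aeval x (genPoly m α f) = 0 ↔
      x ^ (2 ^ m - 1) = 1 ∧ aeval x (traceSeqPoly m α f) ≠ 0 := by
  rw [genPoly, aeval_div_gcd_eq_zero_iff (separable_X_pow_two_pow_sub_one_sub_one hm)]
  simp [sub_eq_zero]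

theorem finrank_codeC (hm : m ≠ 0) :
    Module.finrank (ZMod 2) ↥(codeC m α f) = 2 ^ m - 1 - (genPoly m α f).natDegree :=
  finrank_degreeLT_inf_span_singleton _ (separable_genPoly hm α f).ne_zero

theorem card_support_genPoly_mem_wtSet (hm : m ≠ 0)
    (hdeg : (genPoly m α f).natDegree < 2 ^ m - 1) :
    (genPoly m α f).support.card ∈ wtSet (codeC m α f) := by
  have hg : genPoly m α f ≠ 0 := (separable_genPoly hm α f).ne_zero
  refine ⟨_, ⟨?_, Ideal.mem_span_singleton_self _⟩, hg, rfl⟩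
  exact mem_degreeLT.mpr ((natDegree_lt_iff_degree_lt hg).mp hdeg)

theorem lt_of_mem_wtSet_codeC {β γ : GaloisField 2 m} {N w : ℕ} (hβ : β ≠ 0)
    (hγ : IsPrimitiveRoot γ (2 ^ m - 1))
    (hroot : ∀ i < N, aeval (β * γ ^ i) (genPoly m α f) = 0) (hw : w ∈ wtSet (codeC m α f)) :
    N < w := by
  obtain ⟨c, ⟨hdeg, hspan⟩, hc, rfl⟩ := hw
  refine lt_card_support_of_consecutive_roots hβ hγ hc (mem_degreeLT.mp hdeg) fun i hi => ?_
  exact aeval_eq_zero_of_dvd_aeval_eq_zero (Ideal.mem_span_singleton.mp hspan) (hroot i hi)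

theorem exists_isLeast_wtSet_codeC (hm : m ≠ 0) {β γ : GaloisField 2 m} {N : ℕ} (hβ : β ≠ 0)
    (hγ : IsPrimitiveRoot γ (2 ^ m - 1))
    (hroot : ∀ i < N, aeval (β * γ ^ i) (genPoly m α f) = 0)
    (hdeg : (genPoly m α f).natDegree < 2 ^ m - 1) :
    ∃ d, IsLeast (wtSet (codeC m α f)) d ∧ N + 1 ≤ d ∧ d ≤ 1 + (genPoly m α f).natDegree := by
  have hgen := card_support_genPoly_mem_wtSet hm hdeg
  have hmem := Nat.sInf_mem ⟨_, hgen⟩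
  refine ⟨_, ⟨hmem, fun w hw => Nat.sInf_le hw⟩, lt_of_mem_wtSet_codeC hβ hγ hroot hmem, ?_⟩
  rw [add_comm]
  exact (Nat.sInf_le hgen).trans (card_supp_le_succ_natDegree _)

end SequenceCode

section TraceRepresentation

variable {m : ℕ} {α : GaloisField 2 m} {f : GaloisField 2 m → GaloisField 2 m} {E : Finset ℕ}

/-- The 2-cyclotomic cosets `{e * 2 ^ i mod (2 ^ m - 1)}` of the elements `e` of `E` are pairwise
disjoint and of full size `m`, so that the exponents `e * 2 ^ i` occurring in the traces of the
monomials `x ^ e` do not collide. -/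
def HasDisjointFullCosets (m : ℕ) (E : Finset ℕ) : Prop :=
  Set.InjOn (fun p : ℕ × ℕ => ((p.1 * 2 ^ p.2 : ℕ) : ZMod (2 ^ m - 1)))
    (E ×ˢ Finset.range m : Finset (ℕ × ℕ))

theorem pow_eq_pow_iff_natCast_eq {M : Type*} [CommMonoid M] {ζ : M} {n : ℕ}
    (hζ : IsPrimitiveRoot ζ n) (hn : n ≠ 0) (a b : ℕ) : ζ ^ a = ζ ^ b ↔ (a : ZMod n) = b := by
  rw [(hζ.isOfFinOrder hn).pow_eq_pow_iff_modEq, ← hζ.eq_orderOf, ZMod.natCast_eq_natCast_iff]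

theorem sum_range_pow_eq_ite {K : Type*} [CommRing K] [IsDomain K] {n : ℕ} {y : K}
    (hy : y ^ n = 1) : ∑ t ∈ Finset.range n, y ^ t = if y = 1 then (n : K) else 0 := by
  split_ifs with h
  · simp [h]
  · have hgeom := mul_geom_sum y n
    rw [hy, sub_self] at hgeom
    exact (mul_eq_zero.mp hgeom).resolve_left (sub_ne_zero.mpr h)

theorem aeval_traceSeqPoly (hm : m ≠ 0) (hα : IsPrimitiveRoot α (2 ^ m - 1))
    (hf : ∀ x, Tr (f (x + 1)) = Tr (∑ e ∈ E, x ^ e))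
    {y : GaloisField 2 m} (hy : y ^ (2 ^ m - 1) = 1) :
    aeval y (traceSeqPoly m α f) =
      ∑ p ∈ E ×ˢ Finset.range m, if α ^ (p.1 * 2 ^ p.2) * y = 1 then 1 else 0 := by
  have hv : ((2 ^ m - 1 : ℕ) : GaloisField 2 m) = 1 := by
    rw [CharTwo.natCast_eq_ite, if_neg (Nat.not_even_iff_odd.mpr (odd_two_pow_sub_one hm))]
  have hindicator (p : ℕ × ℕ) :
      ∑ t ∈ Finset.range (2 ^ m - 1), (α ^ (p.1 * 2 ^ p.2) * y) ^ t =
        if α ^ (p.1 * 2 ^ p.2) * y = 1 then 1 else 0 := by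
    rw [sum_range_pow_eq_ite, hv]
    rw [mul_pow, hy, pow_right_comm, hα.pow_eq_one, one_pow, one_mul]
  have hterm (t : ℕ) :
      algebraMap (ZMod 2) _ (Tr (f (α ^ t + 1))) * y ^ t =
        ∑ p ∈ E ×ˢ Finset.range m, (α ^ (p.1 * 2 ^ p.2) * y) ^ t := by
    rw [hf, map_sum, map_sum, Finset.sum_mul, Finset.sum_product]
    refine Finset.sum_congr rfl fun e _ => ?_
    rw [algebraMap_trace_eq_sum_pow_two_pow hm, Finset.sum_mul]
    exact Finset.sum_congr rfl fun i _ => by ring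
  simp only [traceSeqPoly, map_sum, map_mul, aeval_C, map_pow, aeval_X, hterm]
  rw [Finset.sum_comm]
  exact Finset.sum_congr rfl fun p _ => hindicator p

theorem injOn_inv_pow_mul_two_pow (hm : m ≠ 0) (hα : IsPrimitiveRoot α (2 ^ m - 1))
    (hE : HasDisjointFullCosets m E) :
    Set.InjOn (fun p : ℕ × ℕ => (α ^ (p.1 * 2 ^ p.2))⁻¹)
      (E ×ˢ Finset.range m : Finset (ℕ × ℕ)) := by
  intro p hp q hq hpq
  have hv : 2 ^ m - 1 ≠ 0 := (odd_two_pow_sub_one hm).pos.ne'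
  exact hE hp hq ((pow_eq_pow_iff_natCast_eq hα hv _ _).mp (inv_injective hpq))

theorem setOf_aeval_genPoly_eq_zero (hm : m ≠ 0) (hα : IsPrimitiveRoot α (2 ^ m - 1))
    (hE : HasDisjointFullCosets m E)
    (hf : ∀ x, Tr (f (x + 1)) = Tr (∑ e ∈ E, x ^ e)) :
    {x | aeval x (genPoly m α f) = 0} =
      (fun p : ℕ × ℕ => (α ^ (p.1 * 2 ^ p.2))⁻¹) '' (E ×ˢ Finset.range m : Finset (ℕ × ℕ)) := by
  have hα0 : α ≠ 0 := hα.ne_zero (odd_two_pow_sub_one hm).pos.ne'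
  ext x
  rw [Set.mem_ofPred_eq, aeval_genPoly_eq_zero_iff hm]
  constructor
  · rintro ⟨hx, hS⟩
    rw [aeval_traceSeqPoly hm hα hf hx] at hS
    obtain ⟨p, hp, hpx⟩ := Finset.exists_ne_zero_of_sum_ne_zero hS
    exact ⟨p, hp, inv_eq_of_mul_eq_one_right (by_contra fun h => hpx (if_neg h))⟩
  · rintro ⟨p, hp, rfl⟩
    have hroot : ((α ^ (p.1 * 2 ^ p.2))⁻¹) ^ (2 ^ m - 1) = 1 := by
      rw [inv_pow, pow_right_comm, hα.pow_eq_one, one_pow, inv_one]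
    refine ⟨hroot, ?_⟩
    rw [aeval_traceSeqPoly hm hα hf hroot, Finset.sum_eq_single_of_mem p hp,
      if_pos (mul_inv_cancel₀ (pow_ne_zero _ hα0))]
    · exact one_ne_zero
    · refine fun q hq hqp => if_neg fun h => hqp ?_
      exact injOn_inv_pow_mul_two_pow hm hα hE hq hp (inv_eq_of_mul_eq_one_right h)

theorem natDegree_genPoly (hm : m ≠ 0) (hα : IsPrimitiveRoot α (2 ^ m - 1))
    (hE : HasDisjointFullCosets m E)
    (hf : ∀ x, Tr (f (x + 1)) = Tr (∑ e ∈ E, x ^ e)) :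
    (genPoly m α f).natDegree = E.card * m := by
  rw [← ncard_setOf_aeval_eq_zero (separable_genPoly hm α f) (splits_map_genPoly hm hα),
    setOf_aeval_genPoly_eq_zero hm hα hE hf,
    (injOn_inv_pow_mul_two_pow hm hα hE).ncard_image, Set.ncard_coe_finset,
    Finset.card_product, Finset.card_range]

end TraceRepresentation

theorem eq_div_add_mod_mul_of_modEq {a b d n : ℕ} (hd₀ : d ≠ 0) (hd : d < 2 ^ (a + b) - 1)
    (hn : n < 2 ^ (a + b)) (h : d ≡ n * 2 ^ a [MOD 2 ^ (a + b) - 1]) :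
    d = n / 2 ^ b + n % 2 ^ b * 2 ^ a := by
  have hone : 1 ≤ 2 ^ (a + b) := Nat.one_le_two_pow
  have hsplit : n * 2 ^ a =
      n / 2 ^ b + n % 2 ^ b * 2 ^ a + (2 ^ (a + b) - 1) * (n / 2 ^ b) := by
    nth_rw 1 [← Nat.div_add_mod' n (2 ^ b)]
    zify [hone]
    ring
  have hle : n / 2 ^ b + n % 2 ^ b * 2 ^ a ≤ 2 ^ (a + b) - 1 := by
    have hq : n / 2 ^ b < 2 ^ a := Nat.div_lt_of_lt_mul (by rwa [mul_comm, ← pow_add])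
    have hr : (n % 2 ^ b + 1) * 2 ^ a ≤ 2 ^ b * 2 ^ a :=
      Nat.mul_le_mul_right _ (Nat.mod_lt n (Nat.two_pow_pos b))
    rw [add_one_mul, mul_comm (2 ^ b), ← pow_add] at hr
    omega
  rw [hsplit, Nat.ModEq, Nat.add_mul_mod_self_left] at h
  rcases hle.lt_or_eq with hlt | heq
  · exact Nat.ModEq.eq_of_lt_of_lt h hd hlt
  · rw [heq, Nat.mod_self, Nat.mod_eq_of_lt hd] at h
    exact absurd h hd₀

section CosetRepresentatives

/-- Representatives of the 2-cyclotomic cosets modulo `2 ^ (2 * k + 4) - 1` that survive in the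
trace expansion of `f₇ (x + 1)` for `m = 2 * k + 4`. In binary they are `10u` and `11w1`, where
`u` and `w` have `k` digits and `u ≠ 0`. -/
def cosetReps (k : ℕ) : Finset ℕ :=
  Finset.Ioo (2 * 2 ^ k) (3 * 2 ^ k) ∪
    (Finset.Ico (3 * 2 ^ k) (4 * 2 ^ k)).image fun i => 2 * i + 1

variable {k d e : ℕ}

theorem disjoint_Ioo_image_two_mul_add_one (k : ℕ) :
    Disjoint (Finset.Ioo (2 * 2 ^ k) (3 * 2 ^ k))
      ((Finset.Ico (3 * 2 ^ k) (4 * 2 ^ k)).image fun i => 2 * i + 1) := by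
  simp only [Finset.disjoint_left, Finset.mem_Ioo, Finset.mem_image, Finset.mem_Ico]
  omega

theorem two_mul_add_one_injective : Function.Injective fun i : ℕ => 2 * i + 1 :=
  fun i j hij => by simpa using hij

theorem card_cosetReps (k : ℕ) : (cosetReps k).card = 2 ^ (k + 1) - 1 := by
  rw [cosetReps, Finset.card_union_of_disjoint (disjoint_Ioo_image_two_mul_add_one k),
    Finset.card_image_of_injective _ two_mul_add_one_injective, Nat.card_Ioo, Nat.card_Ico,
    pow_succ]
  have := Nat.one_le_two_pow (n := k)
  omega

theorem bounds_of_mem_cosetReps (he : e ∈ cosetReps k) :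
    2 * 2 ^ k < e ∧ e < 8 * 2 ^ k ∧ (4 * 2 ^ k ≤ e → 6 * 2 ^ k < e ∧ Odd e) := by
  simp only [cosetReps, Finset.mem_union, Finset.mem_Ioo, Finset.mem_image, Finset.mem_Ico] at he
  rcases he with he | ⟨i, hi, rfl⟩
  · omega
  · exact ⟨by omega, by omega, fun _ => ⟨by omega, odd_two_mul_add_one i⟩⟩

theorem ne_mul_two_pow_of_mem_cosetReps (hd : d ∈ cosetReps k) (he : e ∈ cosetReps k) {a : ℕ}
    (ha : a ≠ 0) : d ≠ e * 2 ^ a := by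
  rintro rfl
  obtain ⟨-, -, hodd⟩ := bounds_of_mem_cosetReps hd
  obtain ⟨hlow, -, -⟩ := bounds_of_mem_cosetReps he
  have hdouble : e * 2 ≤ e * 2 ^ a := Nat.mul_le_mul_left e (Nat.le_self_pow ha 2)
  exact Nat.not_odd_iff_even.mpr ((even_two.pow_of_ne_zero ha).mul_left e) (hodd (by omega)).2

theorem lt_two_pow_sub_one_of_mem_cosetReps (he : e ∈ cosetReps k) : e < 2 ^ (2 * k + 4) - 1 := by
  obtain ⟨-, hup, -⟩ := bounds_of_mem_cosetReps he
  have hle : 2 ^ (k + 4) ≤ 2 ^ (2 * k + 4) := Nat.pow_le_pow_right two_pos (by omega)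
  rw [pow_add] at hle
  omega

theorem ne_div_add_mod_mul_of_mem_cosetReps (hd : d ∈ cosetReps k) (he : e ∈ cosetReps k) :
    d ≠ e / 2 ^ (k + 2) + e % 2 ^ (k + 2) * 2 ^ (k + 2) := by
  obtain ⟨-, hdup, -⟩ := bounds_of_mem_cosetReps hd
  obtain ⟨helow, heup, hegap⟩ := bounds_of_mem_cosetReps he
  have hpow : 2 ^ (k + 2) = 4 * 2 ^ k := by ring
  have hmod : 2 ≤ e % 2 ^ (k + 2) := by
    rcases lt_or_ge e (2 ^ (k + 2)) with hlt | hge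
    · rw [Nat.mod_eq_of_lt hlt]
      omega
    · rw [Nat.mod_eq_sub_mod hge, Nat.mod_eq_of_lt (by omega)]
      omega
  refine (hdup.trans_le ?_).ne
  calc 8 * 2 ^ k = 2 * 2 ^ (k + 2) := by ring
    _ ≤ e % 2 ^ (k + 2) * 2 ^ (k + 2) := Nat.mul_le_mul_right _ hmod
    _ ≤ _ := Nat.le_add_left _ _

theorem eq_zero_of_modEq_mul_two_pow (hd : d ∈ cosetReps k) (he : e ∈ cosetReps k) {a : ℕ}
    (ha : a < 2 * k + 4) (h : d ≡ e * 2 ^ a [MOD 2 ^ (2 * k + 4) - 1]) : a = 0 := by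
  by_contra ha₀
  obtain ⟨b, hab⟩ := Nat.exists_eq_add_of_le ha.le
  obtain ⟨hdlow, hdup, -⟩ := bounds_of_mem_cosetReps hd
  obtain ⟨-, heup, -⟩ := bounds_of_mem_cosetReps he
  have hdlt := lt_two_pow_sub_one_of_mem_cosetReps hd
  have helt := lt_two_pow_sub_one_of_mem_cosetReps he
  rw [hab] at h hdlt helt
  have hdeq := eq_div_add_mod_mul_of_modEq (by omega) hdlt (by omega) h
  have hediv : e / 2 ^ b * 2 ^ b + e % 2 ^ b = e := Nat.div_add_mod' e (2 ^ b)
  have hq : e / 2 ^ b ≠ 0 := fun hq => by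
    rw [hq, zero_mul, zero_add] at hediv
    rw [hq, zero_add, hediv] at hdeq
    exact ne_mul_two_pow_of_mem_cosetReps hd he ha₀ hdeq
  have hr : e % 2 ^ b ≠ 0 := fun hr => by
    rw [hr, zero_mul, add_zero] at hdeq
    rw [hr, add_zero, ← hdeq] at hediv
    exact ne_mul_two_pow_of_mem_cosetReps he hd (by omega) hediv.symm
  -- Both digits are nonzero, so `2 ^ a ≤ d` and `2 ^ b ≤ e`, which forces `a = b = k + 2`.
  have hpow : 2 ^ (k + 3) = 8 * 2 ^ k := by ring
  have had : 2 ^ a ≤ d := (Nat.le_mul_of_pos_left _ (Nat.pos_of_ne_zero hr)).trans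
    ((Nat.le_add_left _ _).trans_eq hdeq.symm)
  have hbe : 2 ^ b ≤ e := (Nat.le_mul_of_pos_left _ (Nat.pos_of_ne_zero hq)).trans
    ((Nat.le_add_right _ _).trans_eq hediv)
  have hak : a < k + 3 := (Nat.pow_lt_pow_iff_right one_lt_two).mp (by omega)
  have hbk : b < k + 3 := (Nat.pow_lt_pow_iff_right one_lt_two).mp (by omega)
  obtain rfl : a = k + 2 := by omega
  obtain rfl : b = k + 2 := by omega
  exact ne_div_add_mod_mul_of_mem_cosetReps hd he hdeq

theorem eq_of_modEq_of_mem_cosetReps (hd : d ∈ cosetReps k) (he : e ∈ cosetReps k) {i j : ℕ}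
    (hij : i ≤ j) (hj : j < 2 * k + 4)
    (h : d * 2 ^ i ≡ e * 2 ^ j [MOD 2 ^ (2 * k + 4) - 1]) : d = e ∧ i = j := by
  obtain ⟨a, rfl⟩ := Nat.exists_eq_add_of_le hij
  have hodd : Odd (2 ^ (2 * k + 4) - 1) := odd_two_pow_sub_one (by omega)
  have hcop : (2 ^ (2 * k + 4) - 1).Coprime (2 ^ i) := (Nat.coprime_two_right.mpr hodd).pow_right i
  rw [pow_add 2 i a, mul_left_comm, mul_comm d] at h
  have hda : d ≡ e * 2 ^ a [MOD 2 ^ (2 * k + 4) - 1] := Nat.ModEq.cancel_left_of_coprime hcop h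
  obtain rfl := eq_zero_of_modEq_mul_two_pow hd he (by omega) hda
  rw [pow_zero, mul_one] at hda
  exact ⟨hda.eq_of_lt_of_lt (lt_two_pow_sub_one_of_mem_cosetReps hd)
    (lt_two_pow_sub_one_of_mem_cosetReps he), rfl⟩

theorem hasDisjointFullCosets_cosetReps (k : ℕ) :
    HasDisjointFullCosets (2 * k + 4) (cosetReps k) := by
  rintro ⟨d, i⟩ hd ⟨e, j⟩ he h
  simp only [Finset.mem_coe, Finset.mem_product, Finset.mem_range] at hd he
  replace h := (ZMod.natCast_eq_natCast_iff _ _ _).mp h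
  rcases le_total i j with hij | hji
  · obtain ⟨rfl, rfl⟩ := eq_of_modEq_of_mem_cosetReps hd.1 he.1 hij he.2 h
    rfl
  · obtain ⟨rfl, rfl⟩ := eq_of_modEq_of_mem_cosetReps he.1 hd.1 hji hd.2 h.symm
    rfl

end CosetRepresentatives

section TraceReduction

theorem sum_cosetReps {M : Type*} [AddCommMonoid M] (F : ℕ → M) (k : ℕ) :
    ∑ e ∈ cosetReps k, F e =
      ∑ e ∈ Finset.Ioo (2 * 2 ^ k) (3 * 2 ^ k), F e +
        ∑ i ∈ Finset.Ico (3 * 2 ^ k) (4 * 2 ^ k), F (2 * i + 1) := by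
  rw [cosetReps, Finset.sum_union (disjoint_Ioo_image_two_mul_add_one k),
    Finset.sum_image two_mul_add_one_injective.injOn]

theorem trace_sum_Ico_add_trace_sum_Ico {m : ℕ} (k : ℕ) (x : GaloisField 2 m) :
    Tr (∑ i ∈ Finset.Ico (2 * 2 ^ k) (4 * 2 ^ k), x ^ i) +
        Tr (∑ i ∈ Finset.Ico (6 * 2 ^ k) (8 * 2 ^ k), x ^ i) =
      Tr x + Tr (∑ e ∈ cosetReps k, x ^ e) := by
  have hpow : 0 < 2 ^ k := Nat.two_pow_pos k
  have hlow : ∑ i ∈ Finset.Ico (2 * 2 ^ k) (4 * 2 ^ k), x ^ i =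
      x ^ 2 ^ (k + 1) + ∑ i ∈ Finset.Ioo (2 * 2 ^ k) (3 * 2 ^ k), x ^ i +
        ∑ i ∈ Finset.Ico (3 * 2 ^ k) (4 * 2 ^ k), x ^ i := by
    rw [← Finset.sum_Ico_consecutive _ (n := 3 * 2 ^ k) (by omega) (by omega),
      ← Finset.sum_Ioo_add_eq_sum_Ico (by omega), pow_succ', add_comm (x ^ _)]
  have hhigh : ∑ i ∈ Finset.Ico (6 * 2 ^ k) (8 * 2 ^ k), x ^ i =
      (∑ i ∈ Finset.Ico (3 * 2 ^ k) (4 * 2 ^ k), x ^ i) ^ 2 ^ 1 +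
        ∑ i ∈ Finset.Ico (3 * 2 ^ k) (4 * 2 ^ k), x ^ (2 * i + 1) := by
    rw [pow_one, CharTwo.sum_sq, show 6 * 2 ^ k = 2 * (3 * 2 ^ k) by ring,
      show 8 * 2 ^ k = 2 * (4 * 2 ^ k) by ring, sum_Ico_two_mul _ (by omega)]
    simp only [← pow_mul, mul_comm 2]
  rw [hlow, hhigh, sum_cosetReps]
  simp only [map_add, trace_pow_two_pow]
  linear_combination Tr (∑ i ∈ Finset.Ico (3 * 2 ^ k) (4 * 2 ^ k), x ^ i) *
    CharTwo.two_eq_zero (R := ZMod 2)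

theorem trace_pow_two_pow_sub_add_two (k : ℕ) (x : GaloisField 2 (2 * k + 4)) :
    Tr (x ^ (2 ^ (2 * k + 4) - 2 ^ (k + 3) + 2)) =
      Tr (x ^ (2 ^ (k + 1) - 1) * x ^ 2 ^ (k + 2)) := by
  have hexp : (2 ^ (2 * k + 4) - 2 ^ (k + 3) + 2) * 2 ^ (k + 1) =
      2 ^ (2 * k + 4) * (2 ^ (k + 1) - 1) + 2 ^ (k + 2) := by
    have hle : 2 ^ (k + 3) ≤ 2 ^ (2 * k + 4) := Nat.pow_le_pow_right two_pos (by omega)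
    zify [hle, Nat.one_le_two_pow (n := k + 1)]
    ring
  have hfrob : x ^ 2 ^ (2 * k + 4) = x := by
    have : Fintype (GaloisField 2 (2 * k + 4)) := Fintype.ofFinite _
    rw [← GaloisField.card 2 (2 * k + 4) (by omega), Nat.card_eq_fintype_card,
      FiniteField.pow_card]
  rw [← trace_pow_two_pow _ (k + 1), ← pow_mul, hexp, pow_add, pow_mul, hfrob]

theorem trace_add_one_eq_trace_sum_cosetReps (k : ℕ) (x : GaloisField 2 (2 * k + 4)) :
    Tr (x + 1 + (x + 1) ^ (2 ^ (k + 3) - 1) +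
        (x + 1) ^ (2 ^ (2 * k + 4) - 2 ^ (k + 3) + 2)) =
      Tr (∑ e ∈ cosetReps k, x ^ e) := by
  calc _ = Tr x + Tr ((x + 1) ^ (2 ^ (k + 3) - 1) +
        (x + 1) ^ (2 ^ (k + 1) - 1) * (x + 1) ^ 2 ^ (k + 2)) := by
        rw [map_add, trace_pow_two_pow_sub_add_two, map_add, map_add, map_add,
          trace_one_eq_zero_of_even (by omega) ⟨k + 2, by ring⟩, add_zero, add_assoc]
    _ = Tr x + (Tr x + Tr (∑ e ∈ cosetReps k, x ^ e)) := by
        rw [add_one_pow_add_add_one_pow_mul, map_add, trace_sum_Ico_add_trace_sum_Ico]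
    _ = Tr (∑ e ∈ cosetReps k, x ^ e) := by
        rw [← add_assoc, CharTwo.add_self_eq_zero, zero_add]

end TraceReduction

section LinearSpan

theorem card_cosetReps_mul_lt (k : ℕ) :
    (cosetReps k).card * (2 * k + 4) < 2 ^ (2 * k + 4) - 1 := by
  have hk : k + 2 ≤ 2 ^ (k + 1) := Nat.lt_two_pow_self
  have hpow : 2 ^ (2 * k + 4) = 4 * (2 ^ (k + 1) * 2 ^ (k + 1)) := by ring
  have hle : (2 ^ (k + 1) - 1) * (k + 2) ≤ 2 ^ (k + 1) * 2 ^ (k + 1) :=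
    Nat.mul_le_mul (Nat.sub_le _ _) hk
  have hpos : 0 < 2 ^ (k + 1) * 2 ^ (k + 1) := by positivity
  rw [card_cosetReps, hpow, show 2 * k + 4 = 2 * (k + 2) by ring, mul_left_comm]
  omega

theorem aeval_inv_pow_mul_pow_genPoly_eq_zero {k i : ℕ} {α : GaloisField 2 (2 * k + 4)}
    {f : GaloisField 2 (2 * k + 4) → GaloisField 2 (2 * k + 4)}
    (hα : IsPrimitiveRoot α (2 ^ (2 * k + 4) - 1))
    (hf : ∀ x, Tr (f (x + 1)) = Tr (∑ e ∈ cosetReps k, x ^ e)) (hi : i < 2 ^ k) :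
    aeval ((α ^ (6 * 2 ^ k + 1))⁻¹ * ((α ^ 2)⁻¹) ^ i) (genPoly (2 * k + 4) α f) = 0 := by
  have hmem : 6 * 2 ^ k + 1 + 2 * i ∈ cosetReps k :=
    Finset.mem_union_right _ (Finset.mem_image.mpr
      ⟨3 * 2 ^ k + i, Finset.mem_Ico.mpr (by omega), by ring⟩)
  refine (setOf_aeval_genPoly_eq_zero (by omega) hα (hasDisjointFullCosets_cosetReps k) hf).ge
    ⟨(6 * 2 ^ k + 1 + 2 * i, 0), ?_, ?_⟩
  · exact Finset.mem_coe.mpr (Finset.mk_mem_product hmem (Finset.mem_range.mpr (by omega)))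
  · dsimp only
    rw [pow_zero, mul_one, pow_add, mul_inv, pow_mul, inv_pow]

end LinearSpan

/-- Theorem 7: for f₇(x) = x + x^{2^{m/2+1} − 1} + x^{2^m − 2^{m/2+1} + 2} over
𝔽_{2^m}, m ≥ 6 even, the linear span is L_s = m(2^{(m−2)/2} − 1); the code C_s
has length 2^m − 1, dimension 2^m − 1 − m(2^{(m−2)/2} − 1), and minimum
distance d with 2^{(m−4)/2} + 1 ≤ d ≤ 1 + m(2^{(m−2)/2} − 1). -/
theorem stmt17 (m : ℕ) (hm6 : 6 ≤ m) (hme : Even m)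
    (α : GaloisField 2 m) (hα : orderOf α = 2 ^ m - 1)
    (f : GaloisField 2 m → GaloisField 2 m)
    (hf : ∀ x, f x = x + x ^ (2 ^ (m / 2 + 1) - 1) +
        x ^ (2 ^ m - 2 ^ (m / 2 + 1) + 2)) :
    (genPoly m α f).natDegree = m * (2 ^ ((m - 2) / 2) - 1) ∧
    Module.finrank (ZMod 2) ↥(codeC m α f) =
      2 ^ m - 1 - m * (2 ^ ((m - 2) / 2) - 1) ∧
    (∃ d : ℕ, IsLeast (wtSet (codeC m α f)) d ∧
      2 ^ ((m - 4) / 2) + 1 ≤ d ∧ d ≤ 1 + m * (2 ^ ((m - 2) / 2) - 1)) := by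
  obtain ⟨k, rfl⟩ : ∃ k, m = 2 * k + 4 := by
    obtain ⟨n, rfl⟩ := hme
    exact ⟨n - 2, by omega⟩
  have hhalf : (2 * k + 4) / 2 + 1 = k + 3 := by omega
  have hα' : IsPrimitiveRoot α (2 ^ (2 * k + 4) - 1) := hα ▸ IsPrimitiveRoot.orderOf α
  have htrace : ∀ x, Tr (f (x + 1)) = Tr (∑ e ∈ cosetReps k, x ^ e) := fun x => by
    rw [hf, hhalf, trace_add_one_eq_trace_sum_cosetReps]
  have hspan : (genPoly (2 * k + 4) α f).natDegree = (cosetReps k).card * (2 * k + 4) :=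
    natDegree_genPoly (by omega) hα' (hasDisjointFullCosets_cosetReps k) htrace
  have hcard : (cosetReps k).card = 2 ^ ((2 * k + 4 - 2) / 2) - 1 := by
    rw [card_cosetReps, show (2 * k + 4 - 2) / 2 = k + 1 by omega]
  have hα₀ : α ≠ 0 := hα'.ne_zero (odd_two_pow_sub_one (by omega)).pos.ne'
  have hsquare : IsPrimitiveRoot (α ^ 2)⁻¹ (2 ^ (2 * k + 4) - 1) :=
    (hα'.pow_of_coprime 2 (Nat.coprime_two_left.mpr (odd_two_pow_sub_one (by omega)))).inv
  rw [finrank_codeC (by omega), mul_comm (2 * k + 4) (2 ^ _ - 1), ← hcard, ← hspan,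
    show (2 * k + 4 - 4) / 2 = k by omega]
  exact ⟨rfl, rfl, exists_isLeast_wtSet_codeC (by omega) (inv_ne_zero (pow_ne_zero _ hα₀)) hsquare
    (fun i hi => aeval_inv_pow_mul_pow_genPoly_eq_zero hα' htrace hi)
    (hspan ▸ card_cosetReps_mul_lt k)⟩
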